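/- Let m ≥ 2, q = m(m+3)/2 − 1, and let F_π : ℝ^m → ℝ^q be the composition of the canonical free map F(x^1,…,x^m) = (x^1,…,x^m, all quadratic monomials x^α x^β with α ≤ β) with the projection forgetting the coordinate corresponding to the monomial x^1 x^2. Then the linearization of the pullback-metric operator at F_π is surjective: for every family of smooth functions δg_{αβ} = δg_{βα} : ℝ^m → ℝ (1 ≤ α, β ≤ m) there exists a smooth map δf : ℝ^m → ℝ^q such that ⟨∂_α F_π, ∂_β δf⟩ + ⟨∂_β F_π, ∂_α δf⟩ = δg_{αβ} on ℝ^m for all α, β. -/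

import Mathlib

/-- The partial derivative of a map `f : ℝ^m → E` with respect to the `α`-th coordinate,
taken pointwise. -/
noncomputable def pd {m : ℕ} {E : Type*} [NormedAddCommGroup E] [NormedSpace ℝ E]
    (α : Fin m) (f : EuclideanSpace ℝ (Fin m) → E) :
    EuclideanSpace ℝ (Fin m) → E :=
  fun x => fderiv ℝ f x (EuclideanSpace.single α 1)

/-!
Set `u_α = ⟨∂_α F, δf⟩`. By the product rule the linearized equation reads
`∂_β u_α + ∂_α u_β - 2 ⟨∂_α ∂_β F, δf⟩ = δg_{αβ}`. For a graph `F = (x, Q)` the functions `u_α`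
and the vertical part `h` of `δf` can be prescribed independently, and
`⟨∂_α ∂_β F, δf⟩ = ⟨∂_α ∂_β Q, h⟩`. When the coordinates of `Q` are the monomials `x^α x^β`, the
equation for a pair `(α, β)` whose monomial is present only determines the component of `h`
belonging to that monomial. The equation for the forgotten pair `(1, 2)` is
`∂_2 u_1 + ∂_1 u_2 = δg_{12}`, solved by `u_1 = 0` and `u_2` a primitive of `δg_{12}` in the
direction `x^1`.
-/

open Function Topology
open scoped ContDiff

section ParametricIntegral

theorem exists_eventually_forall_norm_le {X Y F : Type*} [TopologicalSpace X] [TopologicalSpace Y]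
    [SeminormedAddCommGroup F] {f : X × Y → F} (hf : Continuous f) {s : Set Y} (hs : IsCompact s)
    (x₀ : X) : ∃ C, ∀ᶠ x in 𝓝 x₀, ∀ y ∈ s, ‖f (x, y)‖ ≤ C := by
  obtain ⟨C, hC⟩ := hs.exists_bound_of_continuousOn
    (hf.comp (Continuous.prodMk_right x₀)).continuousOn
  refine ⟨C + 1, hs.eventually_forall_of_forall_eventually fun y hy => ?_⟩
  have hlt : ‖f (x₀, y)‖ < C + 1 := (hC y hy).trans_lt (lt_add_one C)
  exact (hf.norm.continuousAt.eventually_lt_const hlt).mono fun _ h => h.le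

variable {E F : Type*} [NormedAddCommGroup E] [NormedSpace ℝ E]
  [NormedAddCommGroup F] [NormedSpace ℝ F]

theorem hasFDerivAt_intervalIntegral_of_contDiff {K : E × ℝ → F} (hK : ContDiff ℝ 1 K)
    (a b : ℝ) (x₀ : E) :
    HasFDerivAt (fun x => ∫ s in a..b, K (x, s))
      (∫ s in a..b, (fderiv ℝ K (x₀, s)).comp (ContinuousLinearMap.inl ℝ E ℝ)) x₀ := by
  have hK' : Continuous fun p : E × ℝ =>
      (fderiv ℝ K p).comp (ContinuousLinearMap.inl ℝ E ℝ) :=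
    (hK.continuous_fderiv one_ne_zero).clm_comp continuous_const
  have slice_continuous (x : E) : Continuous fun s : ℝ => K (x, s) :=
    hK.continuous.comp (Continuous.prodMk_right x)
  obtain ⟨C, hC⟩ := exists_eventually_forall_norm_le hK' isCompact_uIcc x₀
  refine intervalIntegral.hasFDerivAt_integral_of_dominated_of_fderiv_le
    (F := fun x s => K (x, s))
    (F' := fun x s => (fderiv ℝ K (x, s)).comp (ContinuousLinearMap.inl ℝ E ℝ))
    (bound := fun _ => C) hC
    (.of_forall fun x => (slice_continuous x).aestronglyMeasurable)
    ((slice_continuous x₀).intervalIntegrable _ _)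
    (hK'.comp (Continuous.prodMk_right x₀)).aestronglyMeasurable
    (.of_forall fun s hs x hx => hx s (Set.uIoc_subset_uIcc hs))
    intervalIntegrable_const
    (.of_forall fun s _ x _ => ?_)
  exact (hK.differentiable one_ne_zero (x, s)).hasFDerivAt.comp x (hasFDerivAt_prodMk_left x s)

/-- The primitive of `g` in the direction `v` that vanishes on the hyperplane `ker ℓ`, for a
functional `ℓ` with `ℓ v = 1`: the integral of `g` along the segment from `x - ℓ x • v` to `x`,
parametrised by `[0, 1]` so that the domain of integration does not depend on `x`. -/
noncomputable def directionalPrimitive (ℓ : E →L[ℝ] ℝ) (v : E) (g : E → F) (x : E) : F :=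
  ∫ s in (0 : ℝ)..1, ℓ x • g (x + (s * ℓ x - ℓ x) • v)

theorem directionalPrimitive_eq_integral (ℓ : E →L[ℝ] ℝ) (v : E) (g : E → F) (x : E) :
    directionalPrimitive ℓ v g x = ∫ r in (0 : ℝ)..ℓ x, g (x + (r - ℓ x) • v) := by
  rw [directionalPrimitive, intervalIntegral.integral_smul,
    intervalIntegral.smul_integral_comp_mul_right (fun r => g (x + (r - ℓ x) • v)),
    zero_mul, one_mul]

theorem hasLineDerivAt_directionalPrimitive [CompleteSpace F] {g : E → F} (hg : Continuous g)
    {ℓ : E →L[ℝ] ℝ} {v : E} (hv : ℓ v = 1) (x : E) :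
    HasLineDerivAt ℝ (directionalPrimitive ℓ v g) (g x) x v := by
  have along_line (t : ℝ) : directionalPrimitive ℓ v g (x + t • v)
      = ∫ r in (0 : ℝ)..ℓ x + t, g (x + (r - ℓ x) • v) := by
    have hℓ : ℓ (x + t • v) = ℓ x + t := by simp [hv]
    rw [directionalPrimitive_eq_integral, hℓ]
    congr! 3 with r
    module
  have hcont : Continuous fun r : ℝ => g (x + (r - ℓ x) • v) := by fun_prop
  have ftc : HasDerivAt (fun b => ∫ r in (0 : ℝ)..b, g (x + (r - ℓ x) • v)) (g x) (ℓ x + 0) := by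
    simpa using hcont.integral_hasStrictDerivAt 0 (ℓ x + 0) |>.hasDerivAt
  simpa only [HasLineDerivAt, along_line] using ftc.comp_const_add (ℓ x) 0

end ParametricIntegral

section SmoothParametricIntegral

universe u

-- `E` and `F` share a universe because the induction below replaces `F` by `E →L[ℝ] F`.
variable {E F : Type u} [NormedAddCommGroup E] [NormedSpace ℝ E]
  [NormedAddCommGroup F] [NormedSpace ℝ F]

theorem contDiff_intervalIntegral {n : ℕ∞} {K : E × ℝ → F} (hK : ContDiff ℝ n K) (a b : ℝ) :
    ContDiff ℝ n fun x => ∫ s in a..b, K (x, s) := by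
  suffices h_nat : ∀ k : ℕ, ContDiff ℝ k K → ContDiff ℝ k fun x => ∫ s in a..b, K (x, s) from
    contDiff_iff_forall_nat_le.2 fun k hk => h_nat k (hK.of_le (mod_cast hk))
  clear hK
  intro k
  induction k generalizing F with
  | zero =>
    intro hK
    exact contDiff_zero.2
      (intervalIntegral.continuous_parametric_intervalIntegral_of_continuous'
        (f := curry K) hK.continuous a b)
  | succ k ih =>
    intro hK
    have hK' : ContDiff ℝ k fun p : E × ℝ =>
        (fderiv ℝ K p).comp (ContinuousLinearMap.inl ℝ E ℝ) :=
      (hK.fderiv_right (by norm_cast)).clm_comp contDiff_const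
    have hK₁ : ContDiff ℝ 1 K := hK.of_le (by norm_cast; omega)
    exact contDiff_succ_iff_hasFDerivAt.2
      ⟨_, ih hK', hasFDerivAt_intervalIntegral_of_contDiff hK₁ a b⟩

theorem contDiff_directionalPrimitive {n : ℕ∞} {g : E → F} (hg : ContDiff ℝ n g)
    (ℓ : E →L[ℝ] ℝ) (v : E) : ContDiff ℝ n (directionalPrimitive ℓ v g) :=
  contDiff_intervalIntegral (K := fun p => ℓ p.1 • g (p.1 + (p.2 * ℓ p.1 - ℓ p.1) • v))
    (by fun_prop) 0 1

theorem exists_contDiff_hasLineDerivAt [CompleteSpace F] {n : ℕ∞} {g : E → F}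
    (hg : ContDiff ℝ n g) {v : E} (hv : v ≠ 0) :
    ∃ w : E → F, ContDiff ℝ n w ∧ ∀ x, HasLineDerivAt ℝ w (g x) x v := by
  obtain ⟨ℓ, hℓ⟩ := SeparatingDual.exists_eq_one (R := ℝ) hv
  exact ⟨directionalPrimitive ℓ v g, contDiff_directionalPrimitive hg ℓ v,
    hasLineDerivAt_directionalPrimitive hg.continuous hℓ⟩

end SmoothParametricIntegral

section PartialDerivative

variable {m : ℕ} {E F : Type*} [NormedAddCommGroup E] [NormedSpace ℝ E]
  [NormedAddCommGroup F] [NormedSpace ℝ F] {x : EuclideanSpace ℝ (Fin m)}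

theorem contDiff_pd {n k : WithTop ℕ∞} {f : EuclideanSpace ℝ (Fin m) → E} (hf : ContDiff ℝ n f)
    (hkn : k + 1 ≤ n) (α : Fin m) : ContDiff ℝ k (pd α f) :=
  (hf.fderiv_right hkn).clm_apply contDiff_const

theorem pd_clm_comp (L : E →L[ℝ] F) {f : EuclideanSpace ℝ (Fin m) → E}
    (hf : DifferentiableAt ℝ f x) (α : Fin m) :
    pd α (fun y => L (f y)) x = L (pd α f x) := by
  rw [pd, fderiv_fun_comp x L.differentiableAt hf, L.fderiv]
  rfl

theorem pd_prodMk {f : EuclideanSpace ℝ (Fin m) → E} {g : EuclideanSpace ℝ (Fin m) → F}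
    (hf : DifferentiableAt ℝ f x) (hg : DifferentiableAt ℝ g x) (α : Fin m) :
    pd α (fun y => (f y, g y)) x = (pd α f x, pd α g x) := by
  rw [pd, hf.fderiv_prodMk hg]
  rfl

theorem pd_add {f g : EuclideanSpace ℝ (Fin m) → E}
    (hf : DifferentiableAt ℝ f x) (hg : DifferentiableAt ℝ g x) (α : Fin m) :
    pd α (fun y => f y + g y) x = pd α f x + pd α g x := by
  rw [pd, fderiv_fun_add hf hg]
  rfl

theorem pd_sub {f g : EuclideanSpace ℝ (Fin m) → E}
    (hf : DifferentiableAt ℝ f x) (hg : DifferentiableAt ℝ g x) (α : Fin m) :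
    pd α (fun y => f y - g y) x = pd α f x - pd α g x := by
  rw [pd, fderiv_fun_sub hf hg]
  rfl

theorem pd_mul {f g : EuclideanSpace ℝ (Fin m) → ℝ}
    (hf : DifferentiableAt ℝ f x) (hg : DifferentiableAt ℝ g x) (α : Fin m) :
    pd α (fun y => f y * g y) x = f x * pd α g x + pd α f x * g x := by
  rw [pd, fderiv_fun_mul hf hg, mul_comm (pd α f x)]
  rfl

theorem pd_inner {E : Type*} [NormedAddCommGroup E] [InnerProductSpace ℝ E]
    {f g : EuclideanSpace ℝ (Fin m) → E}
    (hf : DifferentiableAt ℝ f x) (hg : DifferentiableAt ℝ g x) (α : Fin m) :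
    pd α (fun y => inner ℝ (f y) (g y)) x
      = inner ℝ (f x) (pd α g x) + inner ℝ (pd α f x) (g x) :=
  fderiv_inner_apply ℝ hf hg _

theorem pd_apply {ι : Type*} [Fintype ι] {f : EuclideanSpace ℝ (Fin m) → EuclideanSpace ℝ ι}
    (hf : DifferentiableAt ℝ f x) (α : Fin m) (i : ι) :
    pd α f x i = pd α (fun y => f y i) x :=
  (pd_clm_comp (EuclideanSpace.proj i) hf α).symm

theorem pd_fun_id (α : Fin m) (x : EuclideanSpace ℝ (Fin m)) :
    pd α (fun y => y) x = EuclideanSpace.single α 1 := by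
  simp [pd]

theorem pd_coord (α i : Fin m) (x : EuclideanSpace ℝ (Fin m)) :
    pd α (fun y => y i) x = if i = α then 1 else 0 := by
  rw [← pd_apply differentiableAt_fun_id, pd_fun_id]
  simp

theorem pd_sumEquivProd_symm {ι κ : Type*} [Fintype ι] [Fintype κ]
    {f : EuclideanSpace ℝ (Fin m) → EuclideanSpace ℝ ι}
    {g : EuclideanSpace ℝ (Fin m) → EuclideanSpace ℝ κ}
    (hf : DifferentiableAt ℝ f x) (hg : DifferentiableAt ℝ g x) (α : Fin m) :
    pd α (fun y => EuclideanSpace.sumEquivProd.symm (f y, g y)) x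
      = EuclideanSpace.sumEquivProd.symm (pd α f x, pd α g x) := by
  rw [← pd_prodMk hf hg]
  exact pd_clm_comp
    (EuclideanSpace.sumEquivProd (𝕜 := ℝ) (ι := ι) (κ := κ)).symm.toContinuousLinearMap
    (hf.prodMk hg) α

theorem exists_contDiff_pd_eq {g : EuclideanSpace ℝ (Fin m) → ℝ} (hg : ContDiff ℝ ∞ g)
    (α : Fin m) : ∃ w : EuclideanSpace ℝ (Fin m) → ℝ, ContDiff ℝ ∞ w ∧ pd α w = g := by
  obtain ⟨w, hw, hw'⟩ := exists_contDiff_hasLineDerivAt hg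
    (v := EuclideanSpace.single α 1) (by simp)
  refine ⟨w, hw, funext fun x => ?_⟩
  exact ((hw.differentiable (by simp) x).hasFDerivAt.hasLineDerivAt _).unique (hw' x)

theorem exists_contDiff_pd_add_pd_eq {g : EuclideanSpace ℝ (Fin m) → ℝ} (hg : ContDiff ℝ ∞ g)
    {α β : Fin m} (hαβ : α ≠ β) :
    ∃ u : Fin m → EuclideanSpace ℝ (Fin m) → ℝ,
      (∀ γ, ContDiff ℝ ∞ (u γ)) ∧ ∀ x, pd β (u α) x + pd α (u β) x = g x := by
  obtain ⟨w, hw, hw'⟩ := exists_contDiff_pd_eq hg α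
  refine ⟨Pi.single β w, fun γ => ?_, fun x => ?_⟩
  · obtain rfl | hγ := eq_or_ne γ β
    · simpa using hw
    · rw [Pi.single_eq_of_ne hγ]
      exact contDiff_zero_fun
  · have pd_zero : pd β (0 : EuclideanSpace ℝ (Fin m) → ℝ) x = 0 := by simp [pd]
    simp [hαβ, hw', pd_zero]

end PartialDerivative

section GraphMap

variable {m : ℕ} {κ : Type*} [Fintype κ]
  {Q h : EuclideanSpace ℝ (Fin m) → EuclideanSpace ℝ κ}
  {u : Fin m → EuclideanSpace ℝ (Fin m) → ℝ}

theorem inner_sumEquivProd_symm {ι : Type*} [Fintype ι] (a c : EuclideanSpace ℝ ι)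
    (b d : EuclideanSpace ℝ κ) :
    inner ℝ (EuclideanSpace.sumEquivProd.symm (a, b)) (EuclideanSpace.sumEquivProd.symm (c, d))
      = inner ℝ a c + inner ℝ b d := by
  simp only [PiLp.inner_apply, Fintype.sum_sum_type]
  rfl

/-- The parametrisation `x ↦ (x, Q x)` of the graph of `Q`, with values in the Euclidean space on
`Fin m ⊕ κ` so that inner products split as tangential plus vertical part. -/
noncomputable def graphMap (Q : EuclideanSpace ℝ (Fin m) → EuclideanSpace ℝ κ)
    (x : EuclideanSpace ℝ (Fin m)) : EuclideanSpace ℝ (Fin m ⊕ κ) :=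
  EuclideanSpace.sumEquivProd.symm (x, Q x)

theorem pd_graphMap {x : EuclideanSpace ℝ (Fin m)} (hQ : DifferentiableAt ℝ Q x) (α : Fin m) :
    pd α (graphMap Q) x
      = EuclideanSpace.sumEquivProd.symm (EuclideanSpace.single α 1, pd α Q x) := by
  rw [← pd_fun_id α x]
  exact pd_sumEquivProd_symm differentiableAt_fun_id hQ α

/-- The variation `δf` of `graphMap Q` with prescribed tangential components
`⟨∂_α (graphMap Q), δf⟩ = u α` and prescribed vertical part `h`. -/
noncomputable def graphVariation (Q h : EuclideanSpace ℝ (Fin m) → EuclideanSpace ℝ κ)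
    (u : Fin m → EuclideanSpace ℝ (Fin m) → ℝ) (x : EuclideanSpace ℝ (Fin m)) :
    EuclideanSpace ℝ (Fin m ⊕ κ) :=
  EuclideanSpace.sumEquivProd.symm
    (WithLp.toLp 2 fun α => u α x - inner ℝ (pd α Q x) (h x), h x)

theorem contDiff_graphVariation {n : WithTop ℕ∞} (hQ : ContDiff ℝ (n + 1) Q)
    (hh : ContDiff ℝ n h) (hu : ∀ α, ContDiff ℝ n (u α)) : ContDiff ℝ n (graphVariation Q h u) := by
  refine (EuclideanSpace.sumEquivProd (𝕜 := ℝ) (ι := Fin m) (κ := κ)).symm.contDiff.comp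
    (.prodMk (contDiff_euclidean.2 ?_) hh)
  exact fun α => (hu α).sub ((contDiff_pd hQ le_rfl α).inner ℝ hh)

theorem inner_pd_graphMap_pd_graphVariation (hQ : ContDiff ℝ 2 Q) (hh : Differentiable ℝ h)
    (hu : ∀ α, Differentiable ℝ (u α)) (α β : Fin m) (x : EuclideanSpace ℝ (Fin m)) :
    inner ℝ (pd α (graphMap Q) x) (pd β (graphVariation Q h u) x)
      = pd β (u α) x - inner ℝ (pd β (pd α Q) x) (h x) := by
  have hQ' (γ : Fin m) : Differentiable ℝ (pd γ Q) :=
    (contDiff_pd hQ one_add_one_eq_two.le γ).differentiable one_ne_zero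
  have hQh (γ : Fin m) : Differentiable ℝ fun y => inner ℝ (pd γ Q y) (h y) := (hQ' γ).inner ℝ hh
  have htangential : DifferentiableAt ℝ (fun y => WithLp.toLp 2 fun γ =>
      u γ y - inner ℝ (pd γ Q y) (h y)) x :=
    differentiableAt_euclidean.2 fun γ => (hu γ x).sub (hQh γ x)
  calc inner ℝ (pd α (graphMap Q) x) (pd β (graphVariation Q h u) x)
      = pd β (fun y => u α y - inner ℝ (pd α Q y) (h y)) x
          + inner ℝ (pd α Q x) (pd β h x) := by
        unfold graphVariation
        rw [pd_graphMap (hQ.differentiable two_ne_zero x),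
          pd_sumEquivProd_symm htangential (hh x), inner_sumEquivProd_symm,
          EuclideanSpace.inner_single_left, map_one, one_mul, pd_apply htangential]
    _ = pd β (u α) x - inner ℝ (pd β (pd α Q) x) (h x) := by
        rw [pd_sub (hu α x) (hQh α x), pd_inner (hQ' α x) (hh x)]
        ring

end GraphMap

section QuadraticMap

variable {m : ℕ} {P : Fin m × Fin m → Prop} [DecidablePred P]

/-- The map whose coordinates are the monomials `x^i x^j` for the pairs `(i, j)` satisfying `P`.
The quadratic part of the canonical free map is the case `i ≤ j`; a smaller `P` forgets
monomials. -/
noncomputable def quadraticMap (P : Fin m × Fin m → Prop)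
    (x : EuclideanSpace ℝ (Fin m)) : EuclideanSpace ℝ {p // P p} :=
  WithLp.toLp 2 fun p => x p.1.1 * x p.1.2

theorem contDiff_quadraticMap {n : WithTop ℕ∞} : ContDiff ℝ n (quadraticMap P) :=
  contDiff_euclidean.2 fun p => by unfold quadraticMap; fun_prop

theorem pd_quadraticMap (α : Fin m) (x : EuclideanSpace ℝ (Fin m)) (p : {p // P p}) :
    pd α (quadraticMap P) x p
      = x p.1.1 * (if p.1.2 = α then 1 else 0) + (if p.1.1 = α then 1 else 0) * x p.1.2 := by
  have hQ : Differentiable ℝ (quadraticMap P) := contDiff_quadraticMap.differentiable one_ne_zero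
  rw [pd_apply (hQ x), ← pd_coord α p.1.1 x, ← pd_coord α p.1.2 x]
  exact pd_mul (by fun_prop) (by fun_prop) α

theorem pd_pd_quadraticMap (α β : Fin m) (x : EuclideanSpace ℝ (Fin m)) (p : {p // P p}) :
    pd β (pd α (quadraticMap P)) x p
      = (if p.1 = (α, β) then 1 else 0) + (if p.1 = (β, α) then 1 else 0) := by
  have hQ' : Differentiable ℝ (pd α (quadraticMap P)) :=
    (contDiff_pd contDiff_quadraticMap one_add_one_eq_two.le α).differentiable one_ne_zero
  have pd_const (c : ℝ) : pd β (fun _ => c) x = 0 := by simp [pd]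
  simp_rw [pd_apply (hQ' x), pd_quadraticMap]
  rw [pd_add (by fun_prop) (by fun_prop), pd_mul (by fun_prop) (by fun_prop),
    pd_mul (by fun_prop) (by fun_prop), pd_coord, pd_coord, pd_const, pd_const]
  simp only [Prod.ext_iff, ite_and]
  grind

theorem pd_pd_quadraticMap_comm (α β : Fin m) (x : EuclideanSpace ℝ (Fin m)) :
    pd β (pd α (quadraticMap P)) x = pd α (pd β (quadraticMap P)) x := by
  ext p
  rw [pd_pd_quadraticMap, pd_pd_quadraticMap, add_comm]

theorem sum_subtype_ite_eq {ι M : Type*} [Fintype ι] [DecidableEq ι] [AddCommMonoid M]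
    (P : ι → Prop) [DecidablePred P] (c : ι → M) (j : ι) :
    ∑ i : {i // P i}, (if i.1 = j then c i else 0) = if P j then c j else 0 := by
  rw [← Finset.sum_subtype ({i | P i} : Finset ι) (by simp) fun i => if i = j then c i else 0]
  simp

theorem inner_pd_pd_quadraticMap (α β : Fin m) (x : EuclideanSpace ℝ (Fin m))
    (c : Fin m × Fin m → ℝ) :
    inner ℝ (pd β (pd α (quadraticMap P)) x) (WithLp.toLp 2 fun p : {p // P p} => c p)
      = (if P (α, β) then c (α, β) else 0) + (if P (β, α) then c (β, α) else 0) := by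
  simp only [PiLp.inner_apply, pd_pd_quadraticMap, RCLike.inner_apply, conj_trivial, mul_add,
    mul_ite, mul_one, mul_zero, Finset.sum_add_distrib, sum_subtype_ite_eq P c]

/-- The vertical part of the solution: half the failure of `u` to solve
`∂_β u_α + ∂_α u_β = δg_{αβ}`, halved again for the monomials `(x^α)²`, whose second derivative
is `2` rather than `1`. -/
noncomputable def killingDefect (u : Fin m → EuclideanSpace ℝ (Fin m) → ℝ)
    (δg : Fin m → Fin m → EuclideanSpace ℝ (Fin m) → ℝ) (p : Fin m × Fin m)
    (x : EuclideanSpace ℝ (Fin m)) : ℝ :=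
  (pd p.2 (u p.1) x + pd p.1 (u p.2) x - δg p.1 p.2 x) / (if p.1 = p.2 then 4 else 2)

theorem contDiff_killingDefect {u : Fin m → EuclideanSpace ℝ (Fin m) → ℝ}
    {δg : Fin m → Fin m → EuclideanSpace ℝ (Fin m) → ℝ} (hu : ∀ α, ContDiff ℝ ∞ (u α))
    (hδg : ∀ α β, ContDiff ℝ ∞ (δg α β)) (p : Fin m × Fin m) :
    ContDiff ℝ ∞ (killingDefect u δg p) :=
  (((contDiff_pd (hu _) (by simp) _).add (contDiff_pd (hu _) (by simp) _)).sub
    (hδg _ _)).div_const _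

theorem inner_pd_pd_quadraticMap_killingDefect (hP : ∀ p, P p → p.1 ≤ p.2)
    {u : Fin m → EuclideanSpace ℝ (Fin m) → ℝ}
    {δg : Fin m → Fin m → EuclideanSpace ℝ (Fin m) → ℝ} {α β : Fin m} (hαβ : α ≤ β)
    {x : EuclideanSpace ℝ (Fin m)}
    (hu : ¬ P (α, β) → pd β (u α) x + pd α (u β) x = δg α β x) :
    inner ℝ (pd β (pd α (quadraticMap P)) x)
        (WithLp.toLp 2 fun p : {p // P p} => killingDefect u δg p x)
      = (pd β (u α) x + pd α (u β) x - δg α β x) / 2 := by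
  rw [inner_pd_pd_quadraticMap α β x fun p => killingDefect u δg p x]
  obtain rfl | hlt := hαβ.eq_or_lt
  · by_cases hPα : P (α, α)
    · simp only [hPα, killingDefect, if_true]
      ring
    · simp [hPα, hu hPα]
  · have hPβα : ¬ P (β, α) := fun h => hlt.not_ge (hP _ h)
    by_cases hPαβ : P (α, β)
    · simp [hPαβ, hPβα, killingDefect, hlt.ne]
    · simp [hPαβ, hPβα, hu hPαβ]

theorem exists_contDiff_linearized_graphMap_quadraticMap (hP : ∀ p, P p → p.1 ≤ p.2)
    {u : Fin m → EuclideanSpace ℝ (Fin m) → ℝ}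
    {δg : Fin m → Fin m → EuclideanSpace ℝ (Fin m) → ℝ} (hu : ∀ α, ContDiff ℝ ∞ (u α))
    (hδg : ∀ α β, ContDiff ℝ ∞ (δg α β)) (hδg_symm : ∀ α β, δg α β = δg β α)
    (hu_forgotten : ∀ α β, α ≤ β → ¬ P (α, β) → ∀ x, pd β (u α) x + pd α (u β) x = δg α β x) :
    ∃ δf : EuclideanSpace ℝ (Fin m) → EuclideanSpace ℝ (Fin m ⊕ {p // P p}),
      ContDiff ℝ ∞ δf ∧ ∀ α β x,
        inner ℝ (pd α (graphMap (quadraticMap P)) x) (pd β δf x)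
          + inner ℝ (pd β (graphMap (quadraticMap P)) x) (pd α δf x) = δg α β x := by
  let h (x : EuclideanSpace ℝ (Fin m)) : EuclideanSpace ℝ {p // P p} :=
    WithLp.toLp 2 fun p => killingDefect u δg p x
  have hh : ContDiff ℝ ∞ h := contDiff_euclidean.2 fun p => contDiff_killingDefect hu hδg p
  refine ⟨graphVariation (quadraticMap P) h u, contDiff_graphVariation contDiff_quadraticMap hh hu,
    fun α β x => ?_⟩
  wlog hαβ : α ≤ β generalizing α β
  · rw [hδg_symm, add_comm]
    exact this β α (le_of_not_ge hαβ)
  have inner_pd_pd := inner_pd_graphMap_pd_graphVariation (Q := quadraticMap P)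
    contDiff_quadraticMap (hh.differentiable (by simp)) fun γ => (hu γ).differentiable (by simp)
  rw [inner_pd_pd, inner_pd_pd, pd_pd_quadraticMap_comm β α,
    inner_pd_pd_quadraticMap_killingDefect hP hαβ fun hPαβ => hu_forgotten α β hαβ hPαβ x]
  ring

end QuadraticMap

section Card

theorem card_subtype_fst_le_snd (α : Type*) [LinearOrder α] [Fintype α] :
    Fintype.card {p : α × α // p.1 ≤ p.2} = (Fintype.card α + 1).choose 2 := by
  rw [← Fintype.card_congr Sym2.sortEquiv, Sym2.card]

theorem card_subtype_and_ne {α : Type*} [Fintype α] [DecidableEq α] (P : α → Prop)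
    [DecidablePred P] {a : α} (ha : P a) :
    Fintype.card {b // P b ∧ b ≠ a} = Fintype.card {b // P b} - 1 := by
  have herase : ({b | P b ∧ b ≠ a} : Finset α) = ({b | P b} : Finset α).erase a := by
    ext b
    simp [and_comm]
  rw [Fintype.card_subtype, herase, Finset.card_erase_of_mem (by simpa using ha),
    Fintype.card_subtype]

theorem card_projected_coordinates {m : ℕ} (hm : 2 ≤ m) :
    Fintype.card
        (Fin m ⊕ {p : Fin m × Fin m // p.1 ≤ p.2 ∧ ((p.1 : ℕ), (p.2 : ℕ)) ≠ (0, 1)})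
      = m * (m + 3) / 2 - 1 := by
  let q : Fin m × Fin m := (⟨0, by omega⟩, ⟨1, by omega⟩)
  have hq : q.1 ≤ q.2 := Nat.zero_le 1
  have card_quadratic : Fintype.card
      {p : Fin m × Fin m // p.1 ≤ p.2 ∧ ((p.1 : ℕ), (p.2 : ℕ)) ≠ (0, 1)}
      = (m + 1).choose 2 - 1 := by
    rw [← Fintype.card_fin m, ← card_subtype_fst_le_snd, Fintype.card_fin,
      ← card_subtype_and_ne (fun p : Fin m × Fin m => p.1 ≤ p.2) hq]
    refine Fintype.card_congr (Equiv.subtypeEquivRight fun p => ?_)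
    simp [q, Prod.ext_iff, Fin.ext_iff]
  rw [Fintype.card_sum, Fintype.card_fin, card_quadratic, Nat.choose_two_right]
  have : m * (m + 3) = (m + 1) * m + 2 * m := by ring
  have : 2 * 3 ≤ (m + 1) * m := by nlinarith
  simp only [Nat.add_sub_cancel]
  omega

end Card

/-- For `m ≥ 2`, let `F_π : ℝ^m → ℝ^{m(m+3)/2 − 1}` be the canonical free map with the
coordinate of the monomial `x^1 x^2` forgotten (coordinates indexed by
`Fin m ⊕ {(α,β) | α ≤ β, (α,β) ≠ (1,2)}`, of cardinality `m(m+3)/2 − 1`). Then the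
linearization of the pullback-metric operator at `F_π` is surjective: for every symmetric
family of smooth functions `δg_{αβ}` there is a smooth `δf` with
`⟨∂_α F_π, ∂_β δf⟩ + ⟨∂_β F_π, ∂_α δf⟩ = δg_{αβ}` for all `α, β`. -/
theorem linearization_surjective_at_projected_canonical_map (m : ℕ) (hm : 2 ≤ m)
    (Fπ : EuclideanSpace ℝ (Fin m) →
        EuclideanSpace ℝ
          (Fin m ⊕ {p : Fin m × Fin m // p.1 ≤ p.2 ∧ ((p.1 : ℕ), (p.2 : ℕ)) ≠ (0, 1)}))
    (hFπ : Fπ = fun x => (WithLp.equiv 2 _).symm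
        (Sum.elim (fun α : Fin m => x α)
          (fun p : {p : Fin m × Fin m // p.1 ≤ p.2 ∧ ((p.1 : ℕ), (p.2 : ℕ)) ≠ (0, 1)} =>
            x p.1.1 * x p.1.2)))
    (δg : Fin m → Fin m → EuclideanSpace ℝ (Fin m) → ℝ)
    (hδg : ∀ α β, ContDiff ℝ (⊤ : ℕ∞) (δg α β))
    (hδgsym : ∀ α β, δg α β = δg β α) :
    Fintype.card
        (Fin m ⊕ {p : Fin m × Fin m // p.1 ≤ p.2 ∧ ((p.1 : ℕ), (p.2 : ℕ)) ≠ (0, 1)})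
      = m * (m + 3) / 2 - 1
    ∧ ∃ δf : EuclideanSpace ℝ (Fin m) →
          EuclideanSpace ℝ
            (Fin m ⊕ {p : Fin m × Fin m // p.1 ≤ p.2 ∧ ((p.1 : ℕ), (p.2 : ℕ)) ≠ (0, 1)}),
        ContDiff ℝ (⊤ : ℕ∞) δf
        ∧ ∀ α β : Fin m, ∀ x : EuclideanSpace ℝ (Fin m),
            (inner ℝ (pd α Fπ x) (pd β δf x) : ℝ) + (inner ℝ (pd β Fπ x) (pd α δf x) : ℝ)
              = δg α β x := by
  refine ⟨card_projected_coordinates hm, ?_⟩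
  let i₀ : Fin m := ⟨0, by omega⟩
  let i₁ : Fin m := ⟨1, by omega⟩
  have hi : i₀ ≠ i₁ := by simp [i₀, i₁]
  have hFπ_graph : Fπ = graphMap (quadraticMap fun p : Fin m × Fin m =>
      p.1 ≤ p.2 ∧ ((p.1 : ℕ), (p.2 : ℕ)) ≠ (0, 1)) := hFπ
  obtain ⟨u, hu, hu_forgotten⟩ := exists_contDiff_pd_add_pd_eq (hδg i₀ i₁) hi
  rw [hFπ_graph]
  refine exists_contDiff_linearized_graphMap_quadraticMap (fun p hp => hp.1) hu hδg hδgsym ?_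
  intro α β hαβ hforgotten
  obtain ⟨hα, hβ⟩ : (α : ℕ) = 0 ∧ (β : ℕ) = 1 := by simpa [hαβ] using hforgotten
  obtain rfl : α = i₀ := Fin.ext hα
  obtain rfl : β = i₁ := Fin.ext hβ
  exact hu_forgotten
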